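/- Let R be a commutative noetherian ring, C a finitely generated R-module, and M an injective R-module. Then for every i ≥ 0 there is an isomorphism Tor_i^R(C, Hom_R(C,M)) ≅ Hom_R(Ext^i_R(C,C), M). In particular, if C is n-semidualizing then Tor_i^R(C, Hom_R(C,M)) = 0 for 0 < i ≤ n and the evaluation map C ⊗_R Hom_R(C,M) → M is an isomorphism. -/

import Mathlib

open CategoryTheory
open scoped TensorProduct

/-- The evaluation map `ξ : C ⊗ Hom(C,M) → M`, `c ⊗ f ↦ f c`. -/
noncomputable def evalMap (R : Type) [CommRing R] (C M : Type) [AddCommGroup C] [Module R C]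
    [AddCommGroup M] [Module R M] : C ⊗[R] (C →ₗ[R] M) →ₗ[R] M :=
  TensorProduct.lift ((LinearMap.id : (C →ₗ[R] M) →ₗ[R] (C →ₗ[R] M)).flip)

/-- A finitely generated module `C` over a commutative ring `R` is `n`-semidualizing if the
natural homothety map `R → Hom_R(C,C)` is an isomorphism and `Ext^i_R(C,C) = 0` for
all `0 < i ≤ n`. -/
def IsSemidualizing (R : Type) [CommRing R] (C : Type) [AddCommGroup C] [Module R C]
    (n : ℕ) : Prop :=
  Module.Finite R C ∧ Function.Bijective (LinearMap.lsmul R C) ∧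
    ∀ i : ℕ, 0 < i → i ≤ n →
      Subsingleton (((Ext R (ModuleCat R) i).obj
        (Opposite.op (ModuleCat.of R C))).obj (ModuleCat.of R C))

/-!
Hom evaluation `L ⊗ Hom(C, M) → Hom(Hom(L, C), M)` is natural in `L`. It is bijective for `L`
finitely generated projective by duality, hence, `M` being injective, for every finitely presented
`L` by the five lemma. This is the case `i = 0`. For `i > 0`, choose `0 → K → P → L → 0` with `P`
finitely generated projective. `Tor₁(L, Hom(C, M))` is the kernel of
`K ⊗ Hom(C, M) → P ⊗ Hom(C, M)`, which hom evaluation matches with the `M`-dual of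
`Ext¹(L, C) = coker(Hom(P, C) → Hom(K, C))`. Higher degrees reduce to `K` by dimension shifting.

Mathlib's `Tor` resolves the second variable, so its shift in the first variable comes from
tensoring the short exact sequence with a projective resolution of the second argument.
-/

universe u

section HomInto

variable {R A B D : Type*} [CommRing R] [AddCommGroup A] [Module R A] [AddCommGroup B] [Module R B]
  [AddCommGroup D] [Module R D]

theorem exact_lcomp_of_injective (N : Type u) [AddCommGroup N] [Module R N] [Small.{u} R]
    [Module.Injective R N] {f : A →ₗ[R] B} {g : B →ₗ[R] D} (hfg : Function.Exact f g) :
    Function.Exact (g.lcomp R N) (f.lcomp R N) := by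
  have restrict_surjective : Function.Surjective ((LinearMap.range g).subtype.lcomp R N) :=
    Module.Injective.extension_property R N _ _ _ (Submodule.subtype_injective _)
  have factor : g.lcomp R N =
      g.rangeRestrict.lcomp R N ∘ₗ (LinearMap.range g).subtype.lcomp R N := rfl
  rw [factor, restrict_surjective.comp_exact_iff_exact]
  refine LinearMap.exact_lcomp_of_exact_of_surjective N ?_ g.surjective_rangeRestrict
  exact (Submodule.subtype_injective (LinearMap.range g)).comp_exact_iff_exact.1 hfg

/-- `Hom(coker u, N)` is the kernel of `Hom(u, N)`. -/
noncomputable def quotRangeHomEquivKerLcomp (N : Type*) [AddCommGroup N] [Module R N]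
    (u : A →ₗ[R] B) :
    (B ⧸ LinearMap.range u →ₗ[R] N) ≃ₗ[R] LinearMap.ker (u.lcomp R N) :=
  have hinj : Function.Injective ((LinearMap.range u).mkQ.lcomp R N) :=
    LinearMap.lcomp_injective_of_surjective _ (Submodule.mkQ_surjective _)
  have hexact : Function.Exact ((LinearMap.range u).mkQ.lcomp R N) (u.lcomp R N) :=
    LinearMap.exact_lcomp_of_exact_of_surjective N
      (LinearMap.exact_map_mkQ_range u) (Submodule.mkQ_surjective _)
  (LinearEquiv.ofInjective _ hinj).trans
    (LinearEquiv.ofEq _ _ (LinearMap.exact_iff.1 hexact).symm)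

end HomInto

section HomEvaluation

variable (R L C M : Type*) [CommRing R] [AddCommGroup L] [Module R L] [AddCommGroup C] [Module R C]
  [AddCommGroup M] [Module R M]

/-- Hom evaluation `L ⊗ Hom(C, M) → Hom(Hom(L, C), M)`, `l ⊗ f ↦ (g ↦ f (g l))`. -/
noncomputable def homEval : L ⊗[R] (C →ₗ[R] M) →ₗ[R] ((L →ₗ[R] C) →ₗ[R] M) :=
  TensorProduct.lift ((LinearMap.llcomp R (L →ₗ[R] C) C M).flip ∘ₗ LinearMap.applyₗ)

variable {R L C M} {N : Type u} [AddCommGroup N] [Module R N]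

theorem homEval_comp_rTensor {L' : Type*} [AddCommGroup L'] [Module R L'] (u : L →ₗ[R] L') :
    homEval R L' C M ∘ₗ u.rTensor (C →ₗ[R] M) =
      (u.lcomp R C).lcomp R M ∘ₗ homEval R L C M :=
  TensorProduct.ext' fun _ _ => rfl

theorem homEval_bijective_of_projective [Module.Finite R L] [Module.Projective R L] :
    Function.Bijective (homEval R L C M) := by
  let transpose : ((L →ₗ[R] C) →ₗ[R] M) ≃ₗ[R] (Module.Dual R L →ₗ[R] C →ₗ[R] M) :=
    ((dualTensorHomEquiv R L C).symm.congrLeft M R).trans (TensorProduct.lift.equiv _ _ _ _).symm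
  let bidual : L ⊗[R] (C →ₗ[R] M) ≃ₗ[R] Module.Dual R (Module.Dual R L) ⊗[R] (C →ₗ[R] M) :=
    (Module.evalEquiv R L).rTensor _
  have factor : transpose.toLinearMap ∘ₗ homEval R L C M =
      dualTensorHom R (Module.Dual R L) (C →ₗ[R] M) ∘ₗ bidual.toLinearMap :=
    TensorProduct.ext' fun l f => by
      ext φ c
      change f (φ l • c) = φ l • f c
      exact map_smul f _ _
  have bijective : Function.Bijective
      (dualTensorHom R (Module.Dual R L) (C →ₗ[R] M) ∘ₗ bidual.toLinearMap) :=
    dualTensorHom_bijective.comp bidual.bijective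
  rw [← factor, LinearMap.coe_comp, LinearEquiv.coe_coe] at bijective
  exact (transpose.bijective.of_comp_iff' _).1 bijective

theorem homEval_bijective_of_finitePresentation [Module.FinitePresentation R L]
    [Small.{u} R] [Module.Injective R N] : Function.Bijective (homEval R L C N) := by
  obtain ⟨n, m, p, r, hp, hrp⟩ := Module.FinitePresentation.exists_fin' R L
  exact LinearMap.bijective_of_surjective_of_bijective_of_right_exact
    (r.rTensor (C →ₗ[R] N)) (p.rTensor (C →ₗ[R] N)) ((r.lcomp R C).lcomp R N)
    ((p.lcomp R C).lcomp R N) (homEval R _ C N) (homEval R _ C N) (homEval R L C N)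
    (homEval_comp_rTensor r).symm (homEval_comp_rTensor p).symm
    (rTensor_exact _ hrp hp)
    (exact_lcomp_of_injective N (LinearMap.exact_lcomp_of_exact_of_surjective C hrp hp))
    homEval_bijective_of_projective.surjective homEval_bijective_of_projective
    (LinearMap.rTensor_surjective _ hp)
    (Module.Injective.extension_property R N _ _ _ (LinearMap.lcomp_injective_of_surjective p hp))

theorem map_homEval_ker_rTensor {L' : Type*} [AddCommGroup L'] [Module R L'] (u : L →ₗ[R] L')
    (hL : Function.Bijective (homEval R L C M)) (hL' : Function.Injective (homEval R L' C M)) :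
    (LinearMap.ker (u.rTensor (C →ₗ[R] M))).map (homEval R L C M) =
      LinearMap.ker ((u.lcomp R C).lcomp R M) := by
  rw [← LinearMap.ker_comp_of_ker_eq_bot _ (LinearMap.ker_eq_bot.2 hL'), homEval_comp_rTensor,
    LinearMap.ker_comp, Submodule.map_comap_eq_of_surjective hL.surjective]

/-- Hom evaluation restricted to the kernels of `u ⊗ Hom(C, M)` and `Hom(Hom(u, C), M)`. -/
noncomputable def kerRTensorEquivKerLcomp {L' : Type*} [AddCommGroup L'] [Module R L']
    (u : L →ₗ[R] L') (hL : Function.Bijective (homEval R L C M))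
    (hL' : Function.Injective (homEval R L' C M)) :
    LinearMap.ker (u.rTensor (C →ₗ[R] M)) ≃ₗ[R] LinearMap.ker ((u.lcomp R C).lcomp R M) :=
  (LinearEquiv.ofBijective _ hL).ofSubmodules _ _ (map_homEval_ker_rTensor u hL hL')

end HomEvaluation

section Homothety

variable {R C M : Type*} [CommRing R] [AddCommGroup C] [Module R C] [AddCommGroup M] [Module R M]

theorem applyₗ_id_bijective_of_lsmul_bijective (hC : Function.Bijective (LinearMap.lsmul R C)) :
    Function.Bijective (LinearMap.applyₗ LinearMap.id : ((C →ₗ[R] C) →ₗ[R] M) →ₗ[R] M) := by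
  let e : R ≃ₗ[R] (C →ₗ[R] C) := LinearEquiv.ofBijective (LinearMap.lsmul R C) hC
  have e_one : e 1 = LinearMap.id := LinearMap.ext fun c => one_smul R c
  rw [← e_one]
  exact ((LinearEquiv.congrLeft M R e.symm).trans (LinearMap.ringLmapEquivSelf R R M)).bijective

end Homothety

section EvaluationMap

variable {R C M : Type} [CommRing R] [AddCommGroup C] [Module R C] [AddCommGroup M] [Module R M]

theorem evalMap_eq_applyₗ_id_comp_homEval :
    evalMap R C M = LinearMap.applyₗ LinearMap.id ∘ₗ homEval R C C M :=
  TensorProduct.ext' fun _ _ => rfl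

theorem evalMap_bijective [Module.FinitePresentation R C] [Module.Injective R M]
    (hC : Function.Bijective (LinearMap.lsmul R C)) : Function.Bijective (evalMap R C M) := by
  rw [evalMap_eq_applyₗ_id_comp_homEval, LinearMap.coe_comp]
  exact (applyₗ_id_bijective_of_lsmul_bijective hC).comp homEval_bijective_of_finitePresentation

end EvaluationMap

open Limits Opposite MonoidalCategory

section SplicedResolution

variable {𝒜 : Type*} [Category* 𝒜] [Abelian 𝒜]

theorem quasiIso_toSingle₀Equiv_symm {K : ChainComplex 𝒜 ℕ} {X : 𝒜} {ε : K.X 0 ⟶ X} (hε : Epi ε)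
    (w : K.d 1 0 ≫ ε = 0) (exact_zero : (ShortComplex.mk _ _ w).Exact)
    (exact_succ : ∀ n, K.ExactAt (n + 1)) :
    QuasiIso ((ChainComplex.toSingle₀Equiv K X).symm ⟨ε, w⟩) where
  quasiIsoAt
    | 0 => by
      rw [ChainComplex.quasiIsoAt₀_iff,
        ShortComplex.quasiIso_iff_of_zeros' _ (K.shape _ _ (by simp)) rfl rfl]
      refine (ShortComplex.exact_and_epi_g_iff_of_iso ?_).2 ⟨exact_zero, hε⟩
      exact ShortComplex.isoMk (Iso.refl _) (Iso.refl _) (Iso.refl _)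
        ((Category.id_comp _).trans (Category.comp_id _).symm)
        ((Category.id_comp _).trans
          ((ChainComplex.toSingle₀Equiv_symm_apply_f_zero ε w).symm.trans
            (Category.comp_id _).symm))
    | n + 1 => by
      rw [quasiIsoAt_iff_exactAt' _ _ (ChainComplex.exactAt_succ_single_obj _ _)]
      exact exact_succ n

theorem exact_epi_comp {X₁ X₂ X₃ Y : 𝒜} {f : X₁ ⟶ X₂} {g : X₂ ⟶ X₃} {w : f ≫ g = 0}
    (h : (ShortComplex.mk f g w).Exact) {π : Y ⟶ X₁} (hπ : Epi π) :
    (ShortComplex.mk (π ≫ f) g (by rw [Category.assoc, w, comp_zero])).Exact := by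
  let α : ShortComplex.mk (π ≫ f) g (by rw [Category.assoc, w, comp_zero]) ⟶
      ShortComplex.mk f g w := { τ₁ := π, τ₂ := 𝟙 _, τ₃ := 𝟙 _ }
  exact (ShortComplex.exact_iff_of_epi_of_isIso_of_mono α).2 h

theorem exact_comp_mono {X₁ X₂ X₃ Y : 𝒜} {f : X₁ ⟶ X₂} {g : X₂ ⟶ X₃} {w : f ≫ g = 0}
    (h : (ShortComplex.mk f g w).Exact) {ι : X₃ ⟶ Y} (hι : Mono ι) :
    (ShortComplex.mk f (g ≫ ι) (by rw [reassoc_of% w, zero_comp])).Exact := by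
  let α : ShortComplex.mk f g w ⟶ ShortComplex.mk f (g ≫ ι) (by rw [reassoc_of% w, zero_comp]) :=
    { τ₁ := 𝟙 _, τ₂ := 𝟙 _, τ₃ := ι }
  exact (ShortComplex.exact_iff_of_epi_of_isIso_of_mono α).1 h

/-- The augmentation `P₀ ⟶ Z` of a projective resolution `P` of `Z`, with target `Z` itself rather
than the degree zero term of a single complex. -/
noncomputable def augmentation {Z : 𝒜} (P : ProjectiveResolution Z) : P.complex.X 0 ⟶ Z :=
  P.π.f 0

instance {Z : 𝒜} (P : ProjectiveResolution Z) : Epi (augmentation P) :=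
  inferInstanceAs (Epi (P.π.f 0))

theorem d_comp_augmentation {Z : 𝒜} (P : ProjectiveResolution Z) :
    P.complex.d 1 0 ≫ augmentation P = 0 :=
  P.complex_d_comp_π_f_zero

variable {S : ShortComplex 𝒜}

/-- The projective resolution `⋯ ⟶ P₁ ⟶ P₀ ⟶ S.X₂` of `S.X₃` spliced from a projective resolution
`P` of `S.X₁` and the short exact sequence `S`. -/
noncomputable def spliceResolution (hS : S.ShortExact) [Projective S.X₂]
    (P : ProjectiveResolution S.X₁) : ProjectiveResolution S.X₃ where
  complex := P.complex.augment (augmentation P ≫ S.f) (by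
    rw [reassoc_of% (d_comp_augmentation P), zero_comp])
  projective
    | 0 => ‹Projective S.X₂›
    | n + 1 => P.projective n
  π := (ChainComplex.toSingle₀Equiv _ _).symm
    ⟨S.g, show (augmentation P ≫ S.f) ≫ S.g = 0 by simp⟩
  quasiIso := by
    have augmentation_epi : Epi (augmentation P) := inferInstance
    have exact_zero := exact_epi_comp hS.exact augmentation_epi
    refine quasiIso_toSingle₀Equiv_symm (K := P.complex.augment _ _) hS.epi_g _ exact_zero
      fun n => ?_
    rw [HomologicalComplex.exactAt_iff' _ (n + 2) (n + 1) n (ChainComplex.prev _ _) (by simp)]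
    match n with
    | 0 => exact exact_comp_mono P.exact₀ hS.mono_f
    | n + 1 => exact P.exact_succ n

end SplicedResolution

section LeftDerived

variable {𝒜 ℬ : Type*} [Category* 𝒜] [Category* ℬ] [Abelian 𝒜] [Abelian ℬ]

/-- If `T.g = p ≫ k`, where `p` is a cokernel of `T.f`, then the homology of `T` is the kernel
of `k`. -/
noncomputable def homologyIsoKernel (T : ShortComplex ℬ) {Q : ℬ} {p : T.X₂ ⟶ Q} {w : T.f ≫ p = 0}
    (hp : IsColimit (CokernelCofork.ofπ p w)) {k : Q ⟶ T.X₃} (fac : p ≫ k = T.g) :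
    T.homology ≅ kernel k :=
  have desc_eq : hp.desc (CokernelCofork.ofπ T.g T.zero) = k :=
    Cofork.IsColimit.hom_ext hp ((hp.fac _ _).trans fac.symm)
  ShortComplex.RightHomologyData.homologyIso
    { Q := Q
      H := kernel (hp.desc _)
      p := p
      ι := kernel.ι _
      wp := w
      hp := hp
      wι := kernel.condition _
      hι := kernelIsKernel _ } ≪≫ kernelIsoOfEq desc_eq

section DimensionShift

variable [HasProjectiveResolutions 𝒜] (F : 𝒜 ⥤ ℬ) [F.Additive] {S : ShortComplex 𝒜}
  (hS : S.ShortExact) [Projective S.X₂]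

/-- `L₁F(S.X₃)` is the kernel of `F(S.X₁) ⟶ F(S.X₂)` for a right exact functor `F` and a short
exact sequence `S` with projective middle term. -/
noncomputable def leftDerivedOneIso [PreservesFiniteColimits F] :
    (F.leftDerived 1).obj S.X₃ ≅ kernel (F.map S.f) :=
  let P := projectiveResolution S.X₁
  (spliceResolution hS P).isoLeftDerivedObj F 1 ≪≫
    ShortComplex.homologyMapIso (HomologicalComplex.isoSc' _ 2 1 0 (by simp) (by simp)) ≪≫
    homologyIsoKernel _
      (isColimitCoforkMapOfIsColimit' F (d_comp_augmentation P) P.exact₀.gIsCokernel)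
      (F.map_comp (augmentation P) S.f).symm

/-- Dimension shifting for left derived functors along a short exact sequence `S` with projective
middle term: in positive degrees the spliced resolution of `S.X₃` is a shifted resolution of
`S.X₁`. -/
noncomputable def leftDerivedAddTwoIso (n : ℕ) :
    (F.leftDerived (n + 2)).obj S.X₃ ≅ (F.leftDerived (n + 1)).obj S.X₁ :=
  let P := projectiveResolution S.X₁
  let shift : ((F.mapHomologicalComplex _).obj (spliceResolution hS P).complex).sc'
        (n + 3) (n + 2) (n + 1) ≅
      ((F.mapHomologicalComplex _).obj P.complex).sc' (n + 2) (n + 1) n := Iso.refl _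
  (spliceResolution hS P).isoLeftDerivedObj F (n + 2) ≪≫
    ShortComplex.homologyMapIso
      (HomologicalComplex.isoSc' _ (n + 3) (n + 2) (n + 1) (by simp) (by simp) ≪≫ shift ≪≫
        (HomologicalComplex.isoSc' _ (n + 2) (n + 1) n (by simp) (by simp)).symm) ≪≫
    (P.isoLeftDerivedObj F (n + 1)).symm

end DimensionShift

variable {X : 𝒜} (P : ProjectiveResolution X)

/-- `H₀(F(P)) ≅ F(X)` for a right exact functor `F` and a projective resolution `P` of `X`. -/
noncomputable def homologyZeroMapIso (F : 𝒜 ⥤ ℬ) [F.Additive] [PreservesFiniteColimits F] :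
    ((F.mapHomologicalComplex _).obj P.complex).homology 0 ≅ F.obj X :=
  ChainComplex.isoHomologyι₀ _ ≪≫ asIso (P.fromLeftDerivedZero' F)

theorem homologyZeroMapIso_naturality {F G : 𝒜 ⥤ ℬ} [F.Additive] [PreservesFiniteColimits F]
    [G.Additive] [PreservesFiniteColimits G] (α : F ⟶ G) :
    HomologicalComplex.homologyMap ((NatTrans.mapHomologicalComplex α _).app P.complex) 0 ≫
      (homologyZeroMapIso P G).hom = (homologyZeroMapIso P F).hom ≫ α.app X := by
  have opcycles_naturality :
      HomologicalComplex.opcyclesMap ((NatTrans.mapHomologicalComplex α _).app P.complex) 0 ≫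
        P.fromLeftDerivedZero' G = P.fromLeftDerivedZero' F ≫ α.app X := by
    rw [← cancel_epi (HomologicalComplex.pOpcycles _ _),
      HomologicalComplex.p_opcyclesMap_assoc,
      ProjectiveResolution.pOpcycles_comp_fromLeftDerivedZero',
      ProjectiveResolution.pOpcycles_comp_fromLeftDerivedZero'_assoc]
    exact (α.naturality (P.π.f 0)).symm
  simp only [homologyZeroMapIso, Iso.trans_hom, asIso_hom, Category.assoc,
    ← opcycles_naturality, ChainComplex.isoHomologyι₀]
  rw [← Category.assoc, ← Category.assoc]
  congr 1
  exact HomologicalComplex.homologyι_naturality _ 0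

end LeftDerived

section Ext

variable {R : Type u} [CommRing R]

instance (Y : ModuleCat.{u} R) :
    PreservesFiniteColimits ((linearYoneda R (ModuleCat.{u} R)).obj Y).rightOp :=
  have : PreservesLimits ((linearYoneda R (ModuleCat.{u} R)).obj Y ⋙ forget (ModuleCat R)) :=
    inferInstanceAs (PreservesLimits (yoneda.obj Y))
  have : PreservesLimits ((linearYoneda R (ModuleCat.{u} R)).obj Y) :=
    preservesLimits_of_reflects_of_preserves _ (forget (ModuleCat R))
  preservesFiniteColimits_rightOp _

/-- `Ext⁰(L, Y) ≃ Hom(L, Y)`. -/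
noncomputable def extZeroEquiv (L Y : ModuleCat.{u} R) :
    ((Ext R (ModuleCat.{u} R) 0).obj (op L)).obj Y ≃ₗ[R] (L →ₗ[R] Y) :=
  let e := ((linearYoneda R (ModuleCat.{u} R)).obj Y).rightOp.leftDerivedZeroIsoSelf.app L
  e.unop.toLinearEquiv.symm.trans ModuleCat.homLinearEquiv

variable {S : ShortComplex (ModuleCat.{u} R)} (hS : S.ShortExact) [Projective S.X₂]

/-- `Ext¹(S.X₃, Y)` is the cokernel of `Hom(S.X₂, Y) → Hom(S.X₁, Y)` for a short exact sequence `S`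
with projective middle term. -/
noncomputable def extOneEquiv (Y : ModuleCat.{u} R) :
    ((Ext R (ModuleCat.{u} R) 1).obj (op S.X₃)).obj Y ≃ₗ[R]
      (S.X₁ →ₗ[R] Y) ⧸ LinearMap.range (S.f.hom.lcomp R Y) :=
  let homTo := (linearYoneda R (ModuleCat.{u} R)).obj Y
  let e := (leftDerivedOneIso homTo.rightOp hS).unop.symm ≪≫
    kernelOpUnop (homTo.map S.f.op) ≪≫ ModuleCat.cokernelIsoRangeQuotient _
  e.toLinearEquiv.trans <| Submodule.Quotient.equiv _ _ ModuleCat.homLinearEquiv <|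
    (LinearMap.range_comp _ _).symm.trans <|
      (ModuleCat.homLinearEquiv (S := R) (M := S.X₂) (N := Y)).range_comp (S.f.hom.lcomp R Y)

/-- Dimension shifting for `Ext(-, Y)` along a short exact sequence with projective middle term. -/
noncomputable def extAddTwoEquiv (Y : ModuleCat.{u} R) (n : ℕ) :
    ((Ext R (ModuleCat.{u} R) (n + 2)).obj (op S.X₃)).obj Y ≃ₗ[R]
      ((Ext R (ModuleCat.{u} R) (n + 1)).obj (op S.X₁)).obj Y :=
  let homTo := (linearYoneda R (ModuleCat.{u} R)).obj Y
  (leftDerivedAddTwoIso homTo.rightOp hS n).unop.symm.toLinearEquiv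

end Ext

section Tor

variable {R : Type u} [CommRing R]

/-- The functor `A ↦ A ⊗ K` for a complex `K`. For `K` a projective resolution of `N`, the homology
of `A ⊗ K` is `Tor(A, N)`. -/
noncomputable def tensorComplex (K : ChainComplex (ModuleCat.{u} R) ℕ) :
    ModuleCat.{u} R ⥤ ChainComplex (ModuleCat.{u} R) ℕ where
  obj A := (((tensoringLeft (ModuleCat.{u} R)).obj A).mapHomologicalComplex _).obj K
  map f := (NatTrans.mapHomologicalComplex ((tensoringLeft (ModuleCat.{u} R)).map f) _).app K
  map_id A := by ext1 n; exact id_whiskerRight A (K.X n)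
  map_comp f g := by ext1 n; exact comp_whiskerRight f g (K.X n)

instance (K : ChainComplex (ModuleCat.{u} R) ℕ) : (tensorComplex K).PreservesZeroMorphisms where
  map_zero A B := by ext1 n; exact MonoidalPreadditive.zero_whiskerRight

theorem flat_of_projective (P : ModuleCat.{u} R) [Projective P] : Module.Flat R P :=
  have : Module.Projective R P := P.projective_of_module_projective
  inferInstance

theorem shortExact_map_tensorComplex {S : ShortComplex (ModuleCat.{u} R)} (hS : S.ShortExact)
    (K : ChainComplex (ModuleCat.{u} R) ℕ) [∀ n, Projective (K.X n)] :
    (S.map (tensorComplex K)).ShortExact := by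
  refine HomologicalComplex.shortExact_of_degreewise_shortExact _ fun n => ?_
  have := flat_of_projective (K.X n)
  have : PreservesFiniteColimits (tensorRight (K.X n)) :=
    preservesFiniteColimits_of_natIso (BraidedCategory.tensorLeftIsoTensorRight (K.X n))
  exact hS.map_of_exact (tensorRight (K.X n))

theorem isZero_homology_tensorComplex {N : ModuleCat.{u} R} (P : ProjectiveResolution N)
    (A : ModuleCat.{u} R) [Projective A] (n : ℕ) :
    IsZero (((tensorComplex P.complex).obj A).homology (n + 1)) := by
  have := flat_of_projective A
  rw [← HomologicalComplex.exactAt_iff_isZero_homology,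
    HomologicalComplex.exactAt_iff' _ (n + 2) (n + 1) n (ChainComplex.prev _ _) (by simp)]
  exact (P.exact_succ n).map (tensorLeft A)

instance (A : ModuleCat.{u} R) :
    PreservesFiniteColimits ((tensoringLeft (ModuleCat.{u} R)).obj A) :=
  inferInstanceAs (PreservesFiniteColimits (tensorLeft A))

/-- `Tor₀(L, N) ≃ L ⊗ N`. -/
noncomputable def torZeroEquiv (L N : ModuleCat.{u} R) :
    ((Tor (ModuleCat.{u} R) 0).obj L).obj N ≃ₗ[R] L ⊗[R] N :=
  (((tensoringLeft (ModuleCat.{u} R)).obj L).leftDerivedZeroIsoSelf.app N).toLinearEquiv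

variable {S : ShortComplex (ModuleCat.{u} R)} (hS : S.ShortExact) [Projective S.X₂]

/-- `Tor₁(S.X₃, N)` is the kernel of `S.X₁ ⊗ N → S.X₂ ⊗ N` for a short exact sequence `S` with
projective middle term. -/
noncomputable def torOneEquiv (N : ModuleCat.{u} R) :
    ((Tor (ModuleCat.{u} R) 1).obj S.X₃).obj N ≃ₗ[R] LinearMap.ker (S.f.hom.rTensor N) :=
  let P := projectiveResolution N
  have hP := shortExact_map_tensorComplex hS P.complex
  have hrel : (ComplexShape.down ℕ).Rel 1 0 := rfl
  have : Mono (hP.δ 1 0 hrel) := hP.mono_δ 1 0 hrel (isZero_homology_tensorComplex P S.X₂ 0)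
  (P.isoLeftDerivedObj _ 1 ≪≫
    (limit.isoLimitCone ⟨_, (hP.homology_exact₁ 1 0 hrel).fIsKernel⟩).symm ≪≫
    kernel.mapIso _ _ (homologyZeroMapIso P _) (homologyZeroMapIso P _)
      (homologyZeroMapIso_naturality P ((tensoringLeft (ModuleCat.{u} R)).map S.f)) ≪≫
    ModuleCat.kernelIsoKer (S.f ▷ N)).toLinearEquiv

/-- Dimension shifting for `Tor(-, N)` along a short exact sequence with projective middle term. -/
noncomputable def torAddTwoEquiv (N : ModuleCat.{u} R) (n : ℕ) :
    ((Tor (ModuleCat.{u} R) (n + 2)).obj S.X₃).obj N ≃ₗ[R]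
      ((Tor (ModuleCat.{u} R) (n + 1)).obj S.X₁).obj N :=
  let P := projectiveResolution N
  (P.isoLeftDerivedObj _ (n + 2) ≪≫
    (shortExact_map_tensorComplex hS P.complex).δIso (n + 2) (n + 1) (by simp)
      (isZero_homology_tensorComplex P S.X₂ (n + 1)) (isZero_homology_tensorComplex P S.X₂ n) ≪≫
    (P.isoLeftDerivedObj _ (n + 1)).symm).toLinearEquiv

end Tor

section TorExtDuality

variable {R : Type u} [CommRing R] (C M : Type u) [AddCommGroup C] [Module R C]
  [AddCommGroup M] [Module R M] [Module.Injective R M]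

/-- `Tor₀(L, Hom(C, M)) ≃ Hom(Ext⁰(L, C), M)` by hom evaluation. -/
noncomputable def torZeroEquivHomExtZero (L : ModuleCat.{u} R) [Module.FinitePresentation R L] :
    ((Tor (ModuleCat.{u} R) 0).obj L).obj (.of R (C →ₗ[R] M)) ≃ₗ[R]
      (((Ext R (ModuleCat.{u} R) 0).obj (op L)).obj (.of R C) →ₗ[R] M) :=
  (torZeroEquiv L _).trans <|
    (LinearEquiv.ofBijective _ homEval_bijective_of_finitePresentation).trans <|
    (extZeroEquiv L (.of R C)).symm.congrLeft M R

/-- `Tor₁(S.X₃, Hom(C, M)) ≃ Hom(Ext¹(S.X₃, C), M)` by hom evaluation at `S.X₁` and `S.X₂`, for a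
short exact sequence `S` with projective middle term. -/
noncomputable def torOneEquivHomExtOne {S : ShortComplex (ModuleCat.{u} R)} (hS : S.ShortExact)
    [Projective S.X₂] [Module.FinitePresentation R S.X₁] [Module.FinitePresentation R S.X₂] :
    ((Tor (ModuleCat.{u} R) 1).obj S.X₃).obj (.of R (C →ₗ[R] M)) ≃ₗ[R]
      (((Ext R (ModuleCat.{u} R) 1).obj (op S.X₃)).obj (.of R C) →ₗ[R] M) :=
  (torOneEquiv hS _).trans <|
    (kerRTensorEquivKerLcomp S.f.hom homEval_bijective_of_finitePresentation
      homEval_bijective_of_finitePresentation.injective).trans <|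
    (quotRangeHomEquivKerLcomp M (S.f.hom.lcomp R C)).symm.trans <|
    (extOneEquiv hS (.of R C)).symm.congrLeft M R

theorem tor_iso_hom_ext_of_injective_general [IsNoetherianRing R] (i : ℕ) (L : ModuleCat.{u} R)
    [Module.Finite R L] :
    Nonempty (((Tor (ModuleCat.{u} R) i).obj L).obj (.of R (C →ₗ[R] M)) ≃ₗ[R]
      (((Ext R (ModuleCat.{u} R) i).obj (op L)).obj (.of R C) →ₗ[R] M)) := by
  have finitePresentation (X : ModuleCat.{u} R) [Module.Finite R X] :
      Module.FinitePresentation R X := Module.finitePresentation_of_finite R X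
  induction i using Nat.strong_induction_on generalizing L with | _ i ih =>
  obtain ⟨P, _, _, _, _, p, hp⟩ := Module.exists_finite_presentation R L
  let S : ShortComplex (ModuleCat.{u} R) := p.shortComplexKer
  have hS : S.ShortExact := LinearMap.shortExact_shortComplexKer hp
  have : Projective S.X₂ := ModuleCat.projective_of_categoryTheory_projective (.of R P)
  match i with
  | 0 => exact ⟨torZeroEquivHomExtZero C M L⟩
  | 1 => exact ⟨torOneEquivHomExtOne C M hS⟩
  | i + 2 =>
    obtain ⟨e⟩ := ih (i + 1) (by omega) S.X₁
    exact ⟨(torAddTwoEquiv hS _ i).trans <| e.trans <|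
      (extAddTwoEquiv hS _ i).symm.congrLeft M R⟩

end TorExtDuality

theorem tor_iso_hom_ext_of_injective
    (R : Type) [CommRing R] [IsNoetherianRing R]
    (C : Type) [AddCommGroup C] [Module R C] [Module.Finite R C]
    (M : Type) [AddCommGroup M] [Module R M] (hM : Module.Injective R M) :
    (∀ i : ℕ,
      Nonempty ((((Tor (ModuleCat R) i).obj
          (ModuleCat.of R C)).obj (ModuleCat.of R (C →ₗ[R] M))) ≃ₗ[R]
        ((↑(((Ext R (ModuleCat R) i).obj
          (Opposite.op (ModuleCat.of R C))).obj (ModuleCat.of R C)) →ₗ[R] M)))) ∧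
    (∀ n : ℕ, IsSemidualizing R C n →
      (∀ i : ℕ, 0 < i → i ≤ n →
        Subsingleton (((Tor (ModuleCat R) i).obj
          (ModuleCat.of R C)).obj (ModuleCat.of R (C →ₗ[R] M)))) ∧
      Function.Bijective (evalMap R C M)) := by
  refine ⟨fun i => tor_iso_hom_ext_of_injective_general C M i (ModuleCat.of R C),
    fun n hC => ⟨fun i pos le => ?_, ?_⟩⟩
  · have : Subsingleton (((Ext R (ModuleCat R) i).obj (Opposite.op (ModuleCat.of R C))).obj
        (ModuleCat.of R C)) := hC.2.2 i pos le
    obtain ⟨e⟩ := tor_iso_hom_ext_of_injective_general C M i (ModuleCat.of R C)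
    exact e.toEquiv.subsingleton
  · have := Module.finitePresentation_of_finite R C
    exact evalMap_bijective hC.2.1
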